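/- For every x ∈ ℝⁿ and t > 0, the set of reachable gradients of u at (x,t) satisfies D*u(x,t) = {(Dg(y), −|Dg(y)|) : y ∈ L(x,t)} ⊂ ℝⁿ × ℝ. Consequently p ↦ (spatial component of p) gives a one-to-one correspondence between D*u(x,t) and the set {Dg(y) : y ∈ L(x,t)}. -/

import Mathlib

open scoped InnerProductSpace Topology ENNReal
open Filter

noncomputable section

/-- Euclidean space `ℝⁿ`. -/
abbrev Euc (n : ℕ) := EuclideanSpace ℝ (Fin n)

/-- Hopf–Lax solution of the Eikonal equation `uₜ + |∇u| = 0` with initial data `g`: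
`u(x,t) = min {g(y) : |y - x| ≤ t}`. -/
def HLu {n : ℕ} (g : Euc n → ℝ) (x : Euc n) (t : ℝ) : ℝ :=
  sInf (g '' Metric.closedBall x t)

/-- The set of minimizers `L(x,t) = {y : |y - x| ≤ t ∧ g y = u(x,t)}`. -/
def HLL {n : ℕ} (g : Euc n → ℝ) (x : Euc n) (t : ℝ) : Set (Euc n) :=
  {y | ‖y - x‖ ≤ t ∧ g y = HLu g x t}

/-- The continuous linear map `(v,s) ↦ ⟪w, v⟫ + a • s` on `ℝⁿ × ℝ`, representing the
total derivative with spatial gradient `w` and time derivative `a`. -/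
def gradCLM {n : ℕ} (w : Euc n) (a : ℝ) : (Euc n × ℝ) →L[ℝ] ℝ :=
  (innerSL ℝ w).comp (ContinuousLinearMap.fst ℝ (Euc n) ℝ) +
    a • ContinuousLinearMap.snd ℝ (Euc n) ℝ

/-- The set of reachable gradients `D*u(x,t)`, represented as pairs `(∇u, uₜ) ∈ ℝⁿ × ℝ`:
limits of total derivatives of `u` along sequences of points of differentiability
converging to `p₀`. -/
def Dstar {n : ℕ} (g : Euc n → ℝ) (p₀ : Euc n × ℝ) : Set (Euc n × ℝ) :=
  {q | ∃ z : ℕ → Euc n × ℝ, (∀ k, 0 < (z k).2) ∧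
    Filter.Tendsto z Filter.atTop (𝓝 p₀) ∧
    ∃ d : ℕ → Euc n × ℝ,
      (∀ k, HasFDerivAt (fun q : Euc n × ℝ => HLu g q.1 q.2)
        (gradCLM (d k).1 (d k).2) (z k)) ∧
      Filter.Tendsto d Filter.atTop (𝓝 q)}

/-!
After rescaling, `u(x,t)` is the minimum over the unit ball of `e ↦ g (x + t e)`, so `u` is locally
Lipschitz for `t > 0` and its minimizers depend upper semicontinuously on `(x,t)`. If `y = x + t e`
is a minimizer, then `(x',t') ↦ g (x' + t' e)` touches `u` from above at `(x,t)`, so the only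
possible gradient of `u` there is `(Dg y, ⟪Dg y, e⟫)`, and the first-order condition on the ball
turns the second entry into `-|Dg y|`. Passing to limits gives `⊆`; with Rademacher's theorem, it
also shows that each `D*u(x,t)` contains the pair given by some minimizer.

For `⊇`, shrink the ball towards the given minimizer `y`: the balls with center `x + r (y - x)` and
radius `(1 - r) t` meet the sphere of radius `t` around `x` at most at `y`. If `Dg y = 0`, then `Dg`
vanishes at every minimizer over the shrunken ball. If `Dg y ≠ 0`, then `y` stops being a minimizer
as soon as the shrunken ball is enlarged, so the minimizers over slightly enlarged balls lie outside
the original ball and converge to `y`. Either way the pair of `y` is reachable at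
`(x + r (y - x), (1 - r) t)`, and `r → 0` concludes.
-/

section General

variable {E : Type*} [NormedAddCommGroup E] [NormedSpace ℝ E]

lemma image_add_smul_closedBall_zero_one (x : E) {t : ℝ} (ht : 0 ≤ t) :
    (fun e => x + t • e) '' Metric.closedBall 0 1 = Metric.closedBall x t := by
  rw [← affinity_unitClosedBall ht x, ← Set.image_smul, ← Set.image_vadd, Set.image_image]
  rfl

lemma add_smul_mem_closedBall (x : E) {e : E} {t : ℝ} (ht : 0 ≤ t) (he : ‖e‖ ≤ 1) :
    x + t • e ∈ Metric.closedBall x t := by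
  rw [← image_add_smul_closedBall_zero_one x ht]
  exact Set.mem_image_of_mem _ (mem_closedBall_zero_iff.2 he)

lemma lipschitzWith_fst_add_snd_smul {e : E} (he : ‖e‖ ≤ 1) :
    LipschitzWith 2 fun q : E × ℝ => q.1 + q.2 • e := by
  refine LipschitzWith.of_dist_le_mul fun q p => ?_
  calc dist (q.1 + q.2 • e) (p.1 + p.2 • e)
      ≤ dist q.1 p.1 + dist (q.2 • e) (p.2 • e) := dist_add_add_le _ _ _ _
    _ = dist q.1 p.1 + dist q.2 p.2 * ‖e‖ := by
        rw [dist_eq_norm (q.2 • e), ← sub_smul, norm_smul, ← dist_eq_norm]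
    _ ≤ dist q p + dist q p * 1 := by
        gcongr
        exacts [le_max_left _ _, le_max_right _ _]
    _ = (2 : NNReal) * dist q p := by push_cast; ring

lemma right_mem_closedBall_lineMap {x y : E} {t r : ℝ} (hy : y ∈ Metric.closedBall x t)
    (hr : r ≤ 1) : y ∈ Metric.closedBall (AffineMap.lineMap x y r) ((1 - r) * t) := by
  rw [Metric.mem_closedBall, dist_right_lineMap, Real.norm_of_nonneg (sub_nonneg.2 hr), dist_comm]
  exact mul_le_mul_of_nonneg_left hy (sub_nonneg.2 hr)

lemma eq_of_mem_closedBall_lineMap_of_le_dist [StrictConvexSpace ℝ E] {x y w : E} {t r : ℝ}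
    (hy : y ∈ Metric.closedBall x t) (hr : 0 < r)
    (hw : w ∈ Metric.closedBall (AffineMap.lineMap x y r) ((1 - r) * t)) (hwx : t ≤ dist w x) :
    w = y := by
  set c := AffineMap.lineMap x y r with hc
  have hxc : dist x c ≤ r * t := by
    rw [hc, dist_left_lineMap, Real.norm_of_nonneg hr.le, dist_comm]
    exact mul_le_mul_of_nonneg_left hy hr.le
  have hcw : dist c w ≤ (1 - r) * t := by rwa [dist_comm]
  have hxw : dist x w ≤ dist x c + dist c w := dist_triangle x c w
  rw [dist_comm] at hwx
  have hxw_eq : dist x w = t := by linarith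
  have hc_eq : c = AffineMap.lineMap x w r :=
    eq_lineMap_of_dist_eq_mul_of_dist_eq_mul (by rw [hxw_eq]; linarith) (by rw [hxw_eq]; linarith)
  rw [hc, AffineMap.lineMap_apply_module', AffineMap.lineMap_apply_module'] at hc_eq
  exact (sub_left_injective (smul_right_injective E hr.ne' (add_left_injective x hc_eq))).symm

lemma fderiv_eq_of_eventually_le_of_eq {f h : E → ℝ} {f' h' : E →L[ℝ] ℝ} {a : E}
    (hf : HasFDerivAt f f' a) (hh : HasFDerivAt h h' a) (hle : f ≤ᶠ[𝓝 a] h) (heq : f a = h a) :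
    f' = h' := by
  have hmin : IsLocalMin (h - f) a := by
    filter_upwards [hle] with b hb
    simpa only [Pi.sub_apply, heq, sub_self, sub_nonneg] using hb
  exact (sub_eq_zero.1 (hmin.hasFDerivAt_eq_zero (hh.sub hf))).symm

lemma mem_closure_differentiableAt_of_lipschitzOnWith [FiniteDimensional ℝ E]
    {F : Type*} [NormedAddCommGroup F] [NormedSpace ℝ F] [FiniteDimensional ℝ F]
    {f : E → F} {K : NNReal} {s : Set E} {a : E} (hs : s ∈ 𝓝 a) (hf : LipschitzOnWith K f s) :
    a ∈ closure {b | DifferentiableAt ℝ f b} := by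
  let : MeasurableSpace E := borel E
  have : BorelSpace E := ⟨rfl⟩
  have hdense : Dense {b | b ∈ s → DifferentiableWithinAt ℝ f s b} :=
    MeasureTheory.Measure.dense_of_ae
      (hf.ae_differentiableWithinAt_of_mem (μ := MeasureTheory.Measure.addHaar))
  have ha : a ∈ closure (interior s ∩ {b | b ∈ s → DifferentiableWithinAt ℝ f s b}) :=
    hdense.open_subset_closure_inter isOpen_interior (mem_interior_iff_mem_nhds.2 hs)
  refine closure_mono ?_ ha
  rintro b ⟨hbs, hb⟩
  exact (hb (interior_subset hbs)).differentiableAt (mem_interior_iff_mem_nhds.1 hbs)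

end General

section FirstOrderConditions

variable {F : Type*} [NormedAddCommGroup F] [InnerProductSpace ℝ F] [CompleteSpace F]
  {g : F → ℝ} {p x y : F} {t : ℝ}

lemma gradient_eq_zero_of_isLocalMin (hg : HasGradientAt g p y) (hmin : IsLocalMin g y) :
    p = 0 :=
  (InnerProductSpace.toDual ℝ F).map_eq_zero_iff.1 (hmin.hasFDerivAt_eq_zero hg.hasFDerivAt)

lemma inner_gradient_sub_nonneg_of_isMinOn {s : Set F} (hs : Convex ℝ s)
    (hg : HasGradientAt g p y) (hy : y ∈ s) (hmin : IsMinOn g s y) {w : F} (hw : w ∈ s) :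
    0 ≤ ⟪p, w - y⟫_ℝ :=
  hmin.localize.hasFDerivWithinAt_nonneg hg.hasFDerivAt.hasFDerivWithinAt
    (sub_mem_posTangentConeAt_of_segment_subset (hs.segment_subset hy hw))

lemma inner_gradient_eq_neg_norm_of_isMinOn_closedBall {e : F} (ht : 0 < t) (he : ‖e‖ ≤ 1)
    (hg : HasGradientAt g p (x + t • e)) (hmin : IsMinOn g (Metric.closedBall x t) (x + t • e)) :
    ⟪p, e⟫_ℝ = -‖p‖ := by
  have hsteepest : ⟪p, -(‖p‖⁻¹ • p)⟫_ℝ = -‖p‖ := by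
    rw [inner_neg_right, inner_smul_right, real_inner_self_eq_norm_mul_norm, ← mul_assoc,
      inv_mul_mul_self]
  apply le_antisymm
  · have hd : ‖-(‖p‖⁻¹ • p)‖ ≤ 1 := by
      rw [norm_neg, norm_smul, norm_inv, norm_norm]
      exact inv_mul_le_one
    have hvar := inner_gradient_sub_nonneg_of_isMinOn (convex_closedBall x t) hg
      (add_smul_mem_closedBall x ht.le he) hmin (add_smul_mem_closedBall x ht.le hd)
    rw [add_sub_add_left_eq_sub, ← smul_sub, inner_smul_right, inner_sub_right, hsteepest] at hvar
    linarith [nonneg_of_mul_nonneg_right hvar ht]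
  · calc -‖p‖ ≤ -(‖p‖ * ‖e‖) := neg_le_neg (mul_le_of_le_one_right (norm_nonneg p) he)
      _ ≤ ⟪p, e⟫_ℝ := neg_le_of_abs_le (abs_real_inner_le_norm p e)

lemma locallyLipschitz_of_continuous_gradient {Dg : F → F} (hg : ∀ y, HasGradientAt g (Dg y) y)
    (hDg : Continuous Dg) : LocallyLipschitz g :=
  (contDiff_one_iff_hasFDerivAt.2 ⟨_, (InnerProductSpace.toDual ℝ F).continuous.comp hDg,
    fun y => (hg y).hasFDerivAt⟩).locallyLipschitz

end FirstOrderConditions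

section HopfLax

variable {n : ℕ} {g : Euc n → ℝ}

lemma HLu_le (hc : Continuous g) {x y : Euc n} {t : ℝ} (hy : y ∈ Metric.closedBall x t) :
    HLu g x t ≤ g y :=
  csInf_le ((isCompact_closedBall x t).image hc).bddBelow (Set.mem_image_of_mem g hy)

lemma HLu_eq_sInf_unit_closedBall (x : Euc n) {t : ℝ} (ht : 0 ≤ t) :
    HLu g x t = sInf ((fun e => g (x + t • e)) '' Metric.closedBall 0 1) := by
  rw [HLu, ← image_add_smul_closedBall_zero_one x ht, Set.image_image]

lemma HLu_le_add_smul (hc : Continuous g) (x : Euc n) {e : Euc n} {t : ℝ} (ht : 0 ≤ t)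
    (he : ‖e‖ ≤ 1) : HLu g x t ≤ g (x + t • e) :=
  HLu_le hc (add_smul_mem_closedBall x ht he)

lemma continuousOn_HLu (hc : Continuous g) :
    ContinuousOn (fun q : Euc n × ℝ => HLu g q.1 q.2) {q | 0 ≤ q.2} := by
  have hcont : Continuous fun q : Euc n × ℝ =>
      sInf ((fun e => g (q.1 + q.2 • e)) '' Metric.closedBall 0 1) :=
    (isCompact_closedBall 0 1).continuous_sInf (by fun_prop)
  exact hcont.continuousOn.congr fun q hq => HLu_eq_sInf_unit_closedBall q.1 hq

lemma mem_HLL_iff_isMinOn (hc : Continuous g) {x y : Euc n} {t : ℝ} :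
    y ∈ HLL g x t ↔ y ∈ Metric.closedBall x t ∧ IsMinOn g (Metric.closedBall x t) y := by
  rw [HLL, Set.mem_ofPred_eq, ← mem_closedBall_iff_norm]
  refine and_congr_right fun hy => ⟨fun h w hw => h.trans_le (HLu_le hc hw), fun hmin => ?_⟩
  refine le_antisymm (le_csInf ⟨_, Set.mem_image_of_mem g hy⟩ ?_) (HLu_le hc hy)
  rintro _ ⟨w, hw, rfl⟩
  exact hmin hw

lemma HLL_nonempty (hc : Continuous g) (x : Euc n) {t : ℝ} (ht : 0 ≤ t) : (HLL g x t).Nonempty :=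
  have ⟨y, hy, hmin⟩ := (isCompact_closedBall x t).exists_isMinOn
    (Metric.nonempty_closedBall.2 ht) hc.continuousOn
  ⟨y, (mem_HLL_iff_isMinOn hc).2 ⟨hy, hmin⟩⟩

lemma exists_eq_add_smul_of_mem_HLL {x y : Euc n} {t : ℝ} (ht : 0 ≤ t) (hy : y ∈ HLL g x t) :
    ∃ e : Euc n, ‖e‖ ≤ 1 ∧ x + t • e = y := by
  have hy_ball : y ∈ Metric.closedBall x t := mem_closedBall_iff_norm.2 hy.1
  rw [← image_add_smul_closedBall_zero_one x ht] at hy_ball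
  simpa only [Set.mem_image, mem_closedBall_zero_iff] using hy_ball

lemma exists_subseq_tendsto_mem_HLL (hc : Continuous g) {z : ℕ → Euc n × ℝ} {p : Euc n × ℝ}
    (hz : ∀ k, 0 ≤ (z k).2) (hzp : Tendsto z atTop (𝓝 p)) {y : ℕ → Euc n}
    (hy : ∀ k, y k ∈ HLL g (z k).1 (z k).2) :
    ∃ y₀ ∈ HLL g p.1 p.2, ∃ φ : ℕ → ℕ, StrictMono φ ∧ Tendsto (y ∘ φ) atTop (𝓝 y₀) := by
  have hx : Tendsto (fun k => (z k).1) atTop (𝓝 p.1) := hzp.fst_nhds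
  have ht : Tendsto (fun k => (z k).2) atTop (𝓝 p.2) := hzp.snd_nhds
  have hbounded : ∀ᶠ k in atTop, y k ∈ Metric.closedBall (0 : Euc n) (p.2 + ‖p.1‖ + 1) := by
    filter_upwards [(ht.add hx.norm).eventually_le_const (lt_add_one (p.2 + ‖p.1‖))] with k hk
    rw [mem_closedBall_zero_iff]
    linarith [(hy k).1, norm_le_norm_sub_add (y k) (z k).1]
  obtain ⟨y₀, -, φ, hφ, hyφ⟩ :=
    tendsto_subseq_of_frequently_bounded Metric.isBounded_closedBall hbounded.frequently
  have hu : Tendsto (fun k => HLu g (z k).1 (z k).2) atTop (𝓝 (HLu g p.1 p.2)) :=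
    (continuousOn_HLu hc p (ge_of_tendsto' ht hz)).tendsto.comp
      (tendsto_nhdsWithin_of_tendsto_nhds_of_eventually_within _ hzp (.of_forall hz))
  refine ⟨y₀, ⟨?_, ?_⟩, φ, hφ, hyφ⟩
  · exact le_of_tendsto_of_tendsto' (hyφ.sub (hx.comp hφ.tendsto_atTop)).norm
      (ht.comp hφ.tendsto_atTop) fun k => (hy (φ k)).1
  · exact tendsto_nhds_unique ((hc.tendsto y₀).comp hyφ)
      ((hu.comp hφ.tendsto_atTop).congr fun k => (hy (φ k)).2.symm)

lemma lipschitzOnWith_HLu (hc : Continuous g) {K : NNReal} {x : Euc n} {R T : ℝ}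
    (hg : LipschitzOnWith K g (Metric.closedBall x (T + R))) :
    LipschitzOnWith (K * 2) (fun q : Euc n × ℝ => HLu g q.1 q.2)
      (Metric.closedBall x R ×ˢ Set.Icc 0 T) := by
  have mem_ball {q : Euc n × ℝ} (hq : q ∈ Metric.closedBall x R ×ˢ Set.Icc 0 T) {e : Euc n}
      (he : ‖e‖ ≤ 1) : q.1 + q.2 • e ∈ Metric.closedBall x (T + R) :=
    Metric.closedBall_subset_closedBall' (add_le_add hq.2.2 hq.1)
      (add_smul_mem_closedBall q.1 hq.2.1 he)
  refine LipschitzOnWith.of_le_add_mul _ fun q hq p hp => ?_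
  obtain ⟨y, hy⟩ := HLL_nonempty hc p.1 hp.2.1
  obtain ⟨e, he, rfl⟩ := exists_eq_add_smul_of_mem_HLL hp.2.1 hy
  calc HLu g q.1 q.2 ≤ g (q.1 + q.2 • e) := HLu_le_add_smul hc q.1 hq.2.1 he
    _ ≤ g (p.1 + p.2 • e) + K * dist (q.1 + q.2 • e) (p.1 + p.2 • e) :=
        hg.le_add_mul (mem_ball hq he) (mem_ball hp he)
    _ ≤ HLu g p.1 p.2 + K * (2 * dist q p) := by
        rw [hy.2]
        gcongr
        exact (lipschitzWith_fst_add_snd_smul he).dist_le_mul q p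
    _ = HLu g p.1 p.2 + (K * 2 : NNReal) * dist q p := by push_cast; ring

lemma mem_closure_differentiableAt_HLu (hg : LocallyLipschitz g) {p : Euc n × ℝ} (hp : 0 < p.2) :
    p ∈ closure {z | DifferentiableAt ℝ (fun q : Euc n × ℝ => HLu g q.1 q.2) z} := by
  obtain ⟨K, hK⟩ := (hg.locallyLipschitzOn
    (s := Metric.closedBall p.1 (p.2 + 1 + 1))).exists_lipschitzOnWith_of_compact
    (isCompact_closedBall _ _)
  refine mem_closure_differentiableAt_of_lipschitzOnWith ?_ (lipschitzOnWith_HLu hg.continuous hK)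
  exact prod_mem_nhds (Metric.closedBall_mem_nhds p.1 one_pos) (Icc_mem_nhds hp (lt_add_one p.2))

lemma gradCLM_apply (w : Euc n) (a : ℝ) (q : Euc n × ℝ) :
    gradCLM w a q = ⟪w, q.1⟫_ℝ + a * q.2 := by
  simp [gradCLM]

lemma bijective_gradCLM : Function.Bijective fun d : Euc n × ℝ => gradCLM d.1 d.2 := by
  constructor
  · intro d d' h
    have happly (q : Euc n × ℝ) : ⟪d.1, q.1⟫_ℝ + d.2 * q.2 = ⟪d'.1, q.1⟫_ℝ + d'.2 * q.2 := by
      simpa only [gradCLM_apply] using congrArg (· q) h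
    refine Prod.ext (ext_inner_right ℝ fun v => ?_) ?_
    · simpa using happly (v, 0)
    · simpa using happly (0, 1)
  · intro L
    refine ⟨((InnerProductSpace.toDual ℝ (Euc n)).symm
      (L.comp (ContinuousLinearMap.inl ℝ (Euc n) ℝ)), L (0, 1)), ?_⟩
    ext <;> simp [gradCLM_apply]

lemma hasFDerivAt_comp_fst_add_snd_smul {p e : Euc n} {z : Euc n × ℝ}
    (hg : HasGradientAt g p (z.1 + z.2 • e)) :
    HasFDerivAt (fun q : Euc n × ℝ => g (q.1 + q.2 • e)) (gradCLM p ⟪p, e⟫_ℝ) z := by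
  have hinner : HasFDerivAt (fun q : Euc n × ℝ => q.1 + q.2 • e)
      (ContinuousLinearMap.fst ℝ (Euc n) ℝ +
        (ContinuousLinearMap.snd ℝ (Euc n) ℝ).smulRight e) z :=
    hasFDerivAt_fst.add (hasFDerivAt_snd.smul_const e)
  refine (hg.hasFDerivAt.comp z hinner).congr_fderiv ?_
  ext <;> simp [gradCLM_apply]

lemma eq_gradient_of_hasFDerivAt_HLu (hc : Continuous g) {z d : Euc n × ℝ} (hz : 0 < z.2)
    {y p : Euc n} (hy : y ∈ HLL g z.1 z.2) (hg : HasGradientAt g p y)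
    (hd : HasFDerivAt (fun q : Euc n × ℝ => HLu g q.1 q.2) (gradCLM d.1 d.2) z) :
    d = (p, -‖p‖) := by
  obtain ⟨e, he, rfl⟩ := exists_eq_add_smul_of_mem_HLL hz.le hy
  have hle : ∀ᶠ q : Euc n × ℝ in 𝓝 z, HLu g q.1 q.2 ≤ g (q.1 + q.2 • e) := by
    filter_upwards [continuousAt_snd.eventually (lt_mem_nhds hz)] with q hq
    exact HLu_le_add_smul hc q.1 hq.le he
  have hCLM : gradCLM d.1 d.2 = gradCLM p ⟪p, e⟫_ℝ :=
    fderiv_eq_of_eventually_le_of_eq hd (hasFDerivAt_comp_fst_add_snd_smul hg) hle hy.2.symm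
  rw [← inner_gradient_eq_neg_norm_of_isMinOn_closedBall hz he hg
    ((mem_HLL_iff_isMinOn hc).1 hy).2]
  exact bijective_gradCLM.1 hCLM

end HopfLax

section ReachableGradients

variable {n : ℕ} {g : Euc n → ℝ}

/-- The graph of the space-time gradient of the Hopf–Lax solution: the pairs `((x,t), (w,a))` with
`t > 0` such that the solution is differentiable at `(x,t)` with gradient `(w,a)`. The fibres of
its closure are the sets of reachable gradients. -/
def gradientGraph (g : Euc n → ℝ) : Set ((Euc n × ℝ) × (Euc n × ℝ)) :=
  {p | 0 < p.1.2 ∧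
    HasFDerivAt (fun q : Euc n × ℝ => HLu g q.1 q.2) (gradCLM p.2.1 p.2.2) p.1}

lemma mem_Dstar_iff_mem_closure {p q : Euc n × ℝ} :
    q ∈ Dstar g p ↔ (p, q) ∈ closure (gradientGraph g) := by
  rw [mem_closure_iff_seq_limit]
  constructor
  · rintro ⟨z, hz, hzp, d, hd, hdq⟩
    exact ⟨fun k => (z k, d k), fun k => ⟨hz k, hd k⟩, hzp.prodMk_nhds hdq⟩
  · rintro ⟨zd, hmem, hlim⟩
    exact ⟨fun k => (zd k).1, fun k => (hmem k).1, hlim.fst_nhds,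
      fun k => (zd k).2, fun k => (hmem k).2, hlim.snd_nhds⟩

lemma mem_Dstar_of_tendsto {ι : Type*} {l : Filter ι} [l.NeBot] {z d : ι → Euc n × ℝ}
    {p q : Euc n × ℝ} (hz : Tendsto z l (𝓝 p)) (hd : Tendsto d l (𝓝 q))
    (hmem : ∀ᶠ i in l, d i ∈ Dstar g (z i)) : q ∈ Dstar g p := by
  simp only [mem_Dstar_iff_mem_closure] at hmem ⊢
  exact isClosed_closure.mem_of_tendsto (hz.prodMk_nhds hd) hmem

variable {Dg : Euc n → Euc n}

lemma exists_subseq_tendsto_gradient (hg : ∀ y, HasGradientAt g (Dg y) y)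
    (hDg : Continuous Dg) {z d : ℕ → Euc n × ℝ} {p : Euc n × ℝ}
    (hzd : ∀ k, (z k, d k) ∈ gradientGraph g) (hzp : Tendsto z atTop (𝓝 p)) :
    ∃ y ∈ HLL g p.1 p.2, ∃ φ : ℕ → ℕ, StrictMono φ ∧
      Tendsto (d ∘ φ) atTop (𝓝 (Dg y, -‖Dg y‖)) := by
  have hc : Continuous g := (locallyLipschitz_of_continuous_gradient hg hDg).continuous
  have hz_pos (k : ℕ) : 0 < (z k).2 := (hzd k).1
  choose y hy using fun k => HLL_nonempty hc (z k).1 (hz_pos k).le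
  obtain ⟨y₀, hy₀, φ, hφ, hyφ⟩ := exists_subseq_tendsto_mem_HLL hc (fun k => (hz_pos k).le) hzp hy
  have hd_eq (k : ℕ) : d k = (Dg (y k), -‖Dg (y k)‖) :=
    eq_gradient_of_hasFDerivAt_HLu hc (hz_pos k) (hy k) (hg (y k)) (hzd k).2
  have hgrad : Continuous fun y => (Dg y, -‖Dg y‖) := hDg.prodMk hDg.norm.neg
  exact ⟨y₀, hy₀, φ, hφ, ((hgrad.tendsto y₀).comp hyφ).congr fun k => (hd_eq (φ k)).symm⟩

lemma exists_mem_HLL_of_mem_Dstar (hg : ∀ y, HasGradientAt g (Dg y) y)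
    (hDg : Continuous Dg) {p q : Euc n × ℝ} (hq : q ∈ Dstar g p) :
    ∃ y ∈ HLL g p.1 p.2, q = (Dg y, -‖Dg y‖) := by
  obtain ⟨z, hz, hzp, d, hd, hdq⟩ := hq
  obtain ⟨y, hy, φ, hφ, hdφ⟩ :=
    exists_subseq_tendsto_gradient hg hDg (fun k => ⟨hz k, hd k⟩) hzp
  exact ⟨y, hy, tendsto_nhds_unique (hdq.comp hφ.tendsto_atTop) hdφ⟩

lemma exists_mem_HLL_gradient_mem_Dstar (hg : ∀ y, HasGradientAt g (Dg y) y)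
    (hDg : Continuous Dg) {p : Euc n × ℝ} (hp : 0 < p.2) :
    ∃ y ∈ HLL g p.1 p.2, (Dg y, -‖Dg y‖) ∈ Dstar g p := by
  have hmem : p ∈ closure ({z : Euc n × ℝ | 0 < z.2} ∩
      {z | DifferentiableAt ℝ (fun q : Euc n × ℝ => HLu g q.1 q.2) z}) :=
    (isOpen_lt continuous_const continuous_snd).inter_closure
      ⟨hp, mem_closure_differentiableAt_HLu (locallyLipschitz_of_continuous_gradient hg hDg) hp⟩
  obtain ⟨z, hz, hzp⟩ := mem_closure_iff_seq_limit.1 hmem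
  choose d hd using fun k =>
    bijective_gradCLM.2 (fderiv ℝ (fun q : Euc n × ℝ => HLu g q.1 q.2) (z k))
  have hzd (k : ℕ) : (z k, d k) ∈ gradientGraph g :=
    ⟨(hz k).1, (hz k).2.hasFDerivAt.congr_fderiv (hd k).symm⟩
  obtain ⟨y, hy, φ, hφ, hdφ⟩ := exists_subseq_tendsto_gradient hg hDg hzd hzp
  exact ⟨y, hy, z ∘ φ, fun k => (hzd (φ k)).1, hzp.comp hφ.tendsto_atTop, d ∘ φ,
    fun k => (hzd (φ k)).2, hdφ⟩

lemma gradient_eq_zero_of_mem_HLL_lineMap (hc : Continuous g) {x y w : Euc n} {t r : ℝ}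
    (hg : HasGradientAt g (Dg w) w) (hy : y ∈ HLL g x t) (hr₀ : 0 < r) (hr₁ : r ≤ 1)
    (hDy : Dg y = 0) (hw : w ∈ HLL g (AffineMap.lineMap x y r) ((1 - r) * t)) : Dg w = 0 := by
  obtain ⟨hy_ball, hy_min⟩ := (mem_HLL_iff_isMinOn hc).1 hy
  obtain ⟨hw_ball, hw_min⟩ := (mem_HLL_iff_isMinOn hc).1 hw
  rcases lt_or_ge (dist w x) t with hlt | hge
  · have hwy : g w ≤ g y := hw_min (right_mem_closedBall_lineMap hy_ball hr₁)
    have hw_min_large : IsMinOn g (Metric.closedBall x t) w := fun v hv => hwy.trans (hy_min hv)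
    exact gradient_eq_zero_of_isLocalMin hg
      (hw_min_large.isLocalMin (Metric.closedBall_mem_nhds_of_mem hlt))
  · rwa [eq_of_mem_closedBall_lineMap_of_le_dist hy_ball hr₀ hw_ball hge]

lemma lt_dist_of_mem_HLL_lineMap (hc : Continuous g) {x y w p : Euc n} {t r ρ : ℝ}
    (hy : y ∈ HLL g x t) (hg : HasGradientAt g p y) (hp : p ≠ 0) (hr : r ≤ 1)
    (hρ : (1 - r) * t < ρ) (hw : w ∈ HLL g (AffineMap.lineMap x y r) ρ) : t < dist w x := by
  obtain ⟨hy_ball, hy_min⟩ := (mem_HLL_iff_isMinOn hc).1 hy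
  have hw_min := ((mem_HLL_iff_isMinOn hc).1 hw).2
  by_contra! hwx
  have hyw : g y ≤ g w := hy_min hwx
  have hy_min_shifted : IsMinOn g (Metric.closedBall (AffineMap.lineMap x y r) ρ) y :=
    fun v hv => hyw.trans (hw_min hv)
  have hy_interior : y ∈ Metric.ball (AffineMap.lineMap x y r) ρ :=
    Metric.closedBall_subset_ball hρ (right_mem_closedBall_lineMap hy_ball hr)
  exact hp (gradient_eq_zero_of_isLocalMin hg
    (hy_min_shifted.isLocalMin (Metric.closedBall_mem_nhds_of_mem hy_interior)))

lemma gradient_mem_Dstar_lineMap_of_ne_zero (hg : ∀ y, HasGradientAt g (Dg y) y)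
    (hDg : Continuous Dg) {x y : Euc n} {t r : ℝ} (hy : y ∈ HLL g x t)
    (hr₀ : 0 < r) (hr₁ : r ≤ 1) (hDy : Dg y ≠ 0) :
    (Dg y, -‖Dg y‖) ∈ Dstar g (AffineMap.lineMap x y r, (1 - r) * t) := by
  have hc : Continuous g := (locallyLipschitz_of_continuous_gradient hg hDg).continuous
  have hy_ball := ((mem_HLL_iff_isMinOn hc).1 hy).1
  have ht : 0 ≤ t := dist_nonneg.trans hy_ball
  have hradius : 0 ≤ (1 - r) * t := mul_nonneg (sub_nonneg.2 hr₁) ht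
  set c := AffineMap.lineMap x y r
  let ρ : ℕ → ℝ := fun k => (1 - r) * t + 1 / ((k : ℝ) + 1)
  have hρ_gt (k : ℕ) : (1 - r) * t < ρ k := lt_add_of_pos_right _ Nat.one_div_pos_of_nat
  have hρ_pos (k : ℕ) : 0 < ρ k := hradius.trans_lt (hρ_gt k)
  have hρ_lim : Tendsto (fun k => (c, ρ k)) atTop (𝓝 (c, (1 - r) * t)) := by
    simpa only [add_zero] using tendsto_const_nhds.prodMk_nhds
      ((tendsto_one_div_add_atTop_nhds_zero_nat (𝕜 := ℝ)).const_add ((1 - r) * t))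
  choose w hw hw_mem using fun k =>
    exists_mem_HLL_gradient_mem_Dstar hg hDg (p := (c, ρ k)) (hρ_pos k)
  obtain ⟨w₀, hw₀, φ, hφ, hwφ⟩ :=
    exists_subseq_tendsto_mem_HLL hc (fun k => (hρ_pos k).le) hρ_lim hw
  have hw₀_far : t ≤ dist w₀ x := ge_of_tendsto' (hwφ.dist tendsto_const_nhds) fun k =>
    (lt_dist_of_mem_HLL_lineMap hc hy (hg y) hDy hr₁ (hρ_gt (φ k)) (hw (φ k))).le
  have hw₀_eq : w₀ = y := eq_of_mem_closedBall_lineMap_of_le_dist hy_ball hr₀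
    ((mem_HLL_iff_isMinOn hc).1 hw₀).1 hw₀_far
  have hgrad : Continuous fun y => (Dg y, -‖Dg y‖) := hDg.prodMk hDg.norm.neg
  rw [hw₀_eq] at hwφ
  exact mem_Dstar_of_tendsto (hρ_lim.comp hφ.tendsto_atTop) ((hgrad.tendsto y).comp hwφ)
    (.of_forall fun k => hw_mem (φ k))

lemma gradient_mem_Dstar_lineMap (hg : ∀ y, HasGradientAt g (Dg y) y) (hDg : Continuous Dg)
    {x y : Euc n} {t r : ℝ} (ht : 0 < t) (hy : y ∈ HLL g x t) (hr₀ : 0 < r) (hr₁ : r < 1) :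
    (Dg y, -‖Dg y‖) ∈ Dstar g (AffineMap.lineMap x y r, (1 - r) * t) := by
  by_cases hDy : Dg y = 0
  · have hc : Continuous g := (locallyLipschitz_of_continuous_gradient hg hDg).continuous
    obtain ⟨w, hw, hw_mem⟩ := exists_mem_HLL_gradient_mem_Dstar hg hDg
      (p := (AffineMap.lineMap x y r, (1 - r) * t)) (mul_pos (sub_pos.2 hr₁) ht)
    rwa [gradient_eq_zero_of_mem_HLL_lineMap hc (hg w) hy hr₀ hr₁.le hDy hw, ← hDy] at hw_mem
  · exact gradient_mem_Dstar_lineMap_of_ne_zero hg hDg hy hr₀ hr₁.le hDy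

lemma gradient_mem_Dstar (hg : ∀ y, HasGradientAt g (Dg y) y) (hDg : Continuous Dg)
    {x y : Euc n} {t : ℝ} (ht : 0 < t) (hy : y ∈ HLL g x t) :
    (Dg y, -‖Dg y‖) ∈ Dstar g (x, t) := by
  have hcont : Continuous fun r : ℝ => (AffineMap.lineMap x y r, (1 - r) * t) :=
    AffineMap.lineMap_continuous.prodMk (by fun_prop)
  have hlim : Tendsto (fun r : ℝ => (AffineMap.lineMap x y r, (1 - r) * t)) (𝓝[>] 0)
      (𝓝 (x, t)) :=
    (hcont.tendsto' 0 _ (by simp)).mono_left nhdsWithin_le_nhds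
  refine mem_Dstar_of_tendsto hlim tendsto_const_nhds ?_
  filter_upwards [Ioo_mem_nhdsGT one_pos] with r hr
  exact gradient_mem_Dstar_lineMap hg hDg ht hy hr.1 hr.2

end ReachableGradients

theorem Dstar_eq_gradients_of_minimizers {n : ℕ} (hn : 0 < n) (g : Euc n → ℝ) (Dg : Euc n → Euc n)
    (hg : ∀ y, HasGradientAt g (Dg y) y) (hDg : Continuous Dg)
    (x : Euc n) (t : ℝ) (ht : 0 < t) :
    Dstar g (x, t) = {q : Euc n × ℝ | ∃ y ∈ HLL g x t, q = (Dg y, -‖Dg y‖)} ∧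
    Set.InjOn Prod.fst (Dstar g (x, t)) ∧
    Prod.fst '' Dstar g (x, t) = {v : Euc n | ∃ y ∈ HLL g x t, v = Dg y} := by
  have hDstar : Dstar g (x, t) = {q | ∃ y ∈ HLL g x t, q = (Dg y, -‖Dg y‖)} := by
    ext q
    constructor
    · exact exists_mem_HLL_of_mem_Dstar hg hDg
    · rintro ⟨y, hy, rfl⟩
      exact gradient_mem_Dstar hg hDg ht hy
  refine ⟨hDstar, ?_, ?_⟩ <;> rw [hDstar]
  · rintro _ ⟨y, -, rfl⟩ _ ⟨y', -, rfl⟩ (heq : Dg y = Dg y')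
    rw [heq]
  · ext v
    constructor
    · rintro ⟨_, ⟨y, hy, rfl⟩, rfl⟩
      exact ⟨y, hy, rfl⟩
    · rintro ⟨y, hy, rfl⟩
      exact ⟨_, ⟨y, hy, rfl⟩, rfl⟩
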